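/- Let X and Y be vector spaces over ℝ and let f : X → Y satisfy: (i) f(0) = 0; (ii) for every line L ⊆ X, the image f '' L is either a point or a line in Y; and (iii) for every line L ⊆ X, if f '' L is a line in Y then the restriction of f to L is injective. If a, b ∈ X satisfy a ≠ 0, b ≠ 0, f(a) = 0, and f(b) ≠ 0, then f(a + b) = f(b) (equivalently, f(a + b) = f(a) + f(b)). -/

import Mathlib

def IsLine {X : Type*} [AddCommGroup X] [Module ℝ X] (L : Set X) : Prop :=
  ∃ o d : X, d ≠ 0 ∧ L = {x | ∃ r : ℝ, x = r • d + o}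

def IsPoint {X : Type*} (S : Set X) : Prop := ∃ p : X, S = {p}

section LineMaps

variable {X Y : Type*} [AddCommGroup X] [Module ℝ X] [AddCommGroup Y] [Module ℝ Y] {f : X → Y}

/-- If a map injective on every line with non-degenerate image identifies two distinct points,
it is constant on the line through them. -/
theorem eq_on_line_of_eq
    (h1 : ∀ L : Set X, IsLine L → IsPoint (f '' L) ∨ IsLine (f '' L))
    (h2 : ∀ L : Set X, IsLine L → IsLine (f '' L) → Set.InjOn f L)
    {o d : X} (hd : d ≠ 0) (h : f (d + o) = f o) (r : ℝ) : f (r • d + o) = f o := by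
  have hL : IsLine {x | ∃ r : ℝ, x = r • d + o} := ⟨o, d, hd, rfl⟩
  have mem : ∀ t : ℝ, t • d + o ∈ {x | ∃ r : ℝ, x = r • d + o} := fun t => ⟨t, rfl⟩
  have ho : o ∈ {x | ∃ r : ℝ, x = r • d + o} := ⟨0, by simp⟩
  have hod : d + o ∈ {x | ∃ r : ℝ, x = r • d + o} := ⟨1, by simp⟩
  rcases h1 _ hL with ⟨p, hp⟩ | hl
  · have e1 := hp ▸ Set.mem_image_of_mem f (mem r)
    have e2 := hp ▸ Set.mem_image_of_mem f ho
    rw [Set.mem_singleton_iff] at e1 e2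
    rw [e1, e2]
  · exact absurd (by simpa using h2 _ hL hl hod ho h) hd

/-- If a map sending lines to points or lines separates two points, it maps the line through them
onto the line through their images. -/
theorem image_line_of_ne
    (h1 : ∀ L : Set X, IsLine L → IsPoint (f '' L) ∨ IsLine (f '' L))
    {o d : X} (h : f (d + o) ≠ f o) :
    f '' {x | ∃ r : ℝ, x = r • d + o} = {y | ∃ c : ℝ, y = c • (f (d + o) - f o) + f o} := by
  have hd : d ≠ 0 := by
    rintro rfl
    simp at h
  have ho : o ∈ {x | ∃ r : ℝ, x = r • d + o} := ⟨0, by simp⟩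
  have hod : d + o ∈ {x | ∃ r : ℝ, x = r • d + o} := ⟨1, by simp⟩
  have fo := Set.mem_image_of_mem f ho
  have fod := Set.mem_image_of_mem f hod
  rcases h1 _ ⟨o, d, hd, rfl⟩ with ⟨p, hp⟩ | ⟨u, v, -, hl⟩
  · rw [hp, Set.mem_singleton_iff] at fo fod
    exact absurd (fod.trans fo.symm) h
  · rw [hl] at fo fod ⊢
    obtain ⟨s, hs⟩ := fo
    obtain ⟨t, ht⟩ := fod
    have hts : t - s ≠ 0 := by
      intro e
      exact h (by rw [hs, ht, sub_eq_zero.mp e])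
    ext y
    simp only [Set.mem_ofPred_eq, hs, ht]
    constructor
    · rintro ⟨r, rfl⟩
      refine ⟨(r - s) / (t - s), ?_⟩
      match_scalars <;> field_simp <;> ring
    · rintro ⟨c, rfl⟩
      refine ⟨c * (t - s) + s, ?_⟩
      module

end LineMaps

theorem add_of_zero_value
    {X Y : Type*} [AddCommGroup X] [Module ℝ X] [AddCommGroup Y] [Module ℝ Y]
    (f : X → Y) (h0 : f 0 = 0)
    (h1 : ∀ L : Set X, IsLine L → IsPoint (f '' L) ∨ IsLine (f '' L))
    (h2 : ∀ L : Set X, IsLine L → IsLine (f '' L) → Set.InjOn f L)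
    (a b : X) (ha : a ≠ 0) (hb : b ≠ 0) (hfa : f a = 0) (hfb : f b ≠ 0) :
    f (a + b) = f b ∧ f (a + b) = f a + f b := by
  suffices h : f (a + b) = f b from ⟨h, by rw [h, hfa, zero_add]⟩
  by_contra hne
  have hA : ∀ s : ℝ, f (s • a) = 0 := fun s => by
    simpa [h0] using eq_on_line_of_eq h1 h2 (o := 0) ha (by simp [hfa, h0]) s
  have hq : f ((1 / 2 : ℝ) • b) ≠ 0 := by
    intro hq
    have := eq_on_line_of_eq h1 h2 (o := 0) (d := (1 / 2 : ℝ) • b) (by simpa using hb)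
      (by simpa [h0] using hq) 2
    exact hfb (by simpa [h0, smul_smul] using this)
  have hmul : ∀ (s : ℝ) (p : X), p = (2 : ℝ) • ((1 / 2 : ℝ) • b - s • a) + s • a →
      ∃ c : ℝ, f p = c • f ((1 / 2 : ℝ) • b) := by
    intro s p hp
    have := image_line_of_ne h1 (o := s • a) (d := (1 / 2 : ℝ) • b - s • a)
      (by simpa [hA] using hq)
    have hm : f p ∈ f '' {x | ∃ r : ℝ, x = r • ((1 / 2 : ℝ) • b - s • a) + s • a} :=
      Set.mem_image_of_mem f ⟨2, hp⟩
    rw [this] at hm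
    simpa [hA] using hm
  obtain ⟨c₁, hc₁⟩ := hmul 0 b (by module)
  obtain ⟨c₂, hc₂⟩ := hmul (-1) (a + b) (by module)
  have hc : c₂ - c₁ ≠ 0 := by
    intro e
    exact hne (by rw [hc₁, hc₂, sub_eq_zero.mp e])
  have hzero : (0 : Y) ∈ f '' {x | ∃ r : ℝ, x = r • a + b} := by
    rw [image_line_of_ne h1 hne]
    refine ⟨-c₁ / (c₂ - c₁), ?_⟩
    rw [hc₁, hc₂, ← sub_smul, smul_smul, div_mul_cancel₀ _ hc, ← add_smul]
    simp
  obtain ⟨_, ⟨s, rfl⟩, hs⟩ := hzero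
  have hd : b + (2 * s) • a ≠ 0 := by
    intro e
    apply hfb
    rw [eq_neg_of_add_eq_zero_left e, ← neg_smul]
    exact hA _
  have hend := eq_on_line_of_eq h1 h2 (o := (-s) • a) hd
    (by rw [hA, ← hs]; congr 1; module) (1 / 2)
  apply hq
  rw [hA] at hend
  rw [← hend]
  congr 1
  module
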